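/- arXiv:1912.06611 — 2 statements merged into one kernel-verified Lean document; each statement's English description precedes it below -/
import Mathlib

section
/- The real number ζ(3) = ∑_{i=1}^∞ 1/i³ is irrational; that is, there is no rational number r with ζ(3) = r. -/
/-- ζ(3), the sum of the series ∑_{i=1}^∞ 1/i³. -/
noncomputable def zeta3 : ℝ := ∑' i : ℕ, 1 / ((i : ℝ) + 1) ^ 3

/-!
Apéry's proof. The sequences `b n = ∑ k ≤ n, (C(n, k) C(n + k, k)) ^ 2` and
`a n = ∑ k ≤ n, (C(n, k) C(n + k, k)) ^ 2 c n k`, where `c n k` is close to `ζ(3)`, both satisfy a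
three-term recurrence, proved by telescoping in `k`. Their Casoratian is therefore explicit, which
gives `a (n + 1) / b (n + 1) - a n / b n = 6 / ((n + 1) ^ 3 b (n + 1) b n)`, and hence
`0 < b n ζ(3) - a n = O(1 / b n)`.

If `D n` is the least common multiple of `1, …, n`, then `2 (D n) ^ 3 a n` is an integer. The
recurrence forces `b n` to grow at least like `32 ^ n`, while `D n = O(e ^ (1.15 n))` by Chebyshev's
method. Since `e ^ 3.45 < 32`, the positive linear forms `2 (D n) ^ 3 (b n ζ(3) - a n)` in `1` and
`ζ(3)` with integer coefficients tend to `0`, so `ζ(3)` cannot be rational.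

Chebyshev's method is applied to the factorial ratio `n! / ((n/2)! (n/3)! (n/7)! (n/42)!)`: since
`1/2 + 1/3 + 1/7 + 1/42 = 1`, its logarithm is linear in `n` up to an error `O(log n)`, with slope
`log 2 / 2 + log 3 / 3 + log 7 / 7 + log 42 / 42 < 1.09`, and it bounds `ψ n - ψ (n / 42)`. The
factor `42 / 41` from iterating still leaves a constant below `1.15`.
-/

open Filter Finset Topology

lemma irrational_of_frequently_ne_of_tendsto {ι : Type*} {l : Filter ι} {x : ℝ} {p q : ι → ℤ}
    (hne : ∃ᶠ i in l, q i * x - p i ≠ 0) (hlim : Tendsto (fun i ↦ q i * x - p i) l (𝓝 0)) :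
    Irrational x := by
  rintro ⟨r, rfl⟩
  have hlim' : Tendsto (fun i ↦ |(r.den : ℝ) * (q i * r - p i)|) l (𝓝 0) := by
    simpa using (hlim.const_mul (r.den : ℝ)).abs
  obtain ⟨i, hi, hlt⟩ := (hne.and_eventually (hlim'.eventually_lt_const one_pos)).exists
  have hint : (r.den : ℝ) * (q i * r - p i) = (q i * r.num - r.den * p i : ℤ) := by
    have hr : (r : ℝ) * r.den = r.num := by exact_mod_cast Rat.mul_den_eq_num r
    push_cast
    linear_combination (q i : ℝ) * hr
  have hzero : q i * r.num - r.den * p i = 0 := by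
    rw [hint] at hlt
    exact Int.abs_lt_one_iff.1 (by exact_mod_cast hlt)
  refine hi ((mul_eq_zero.1 ?_).resolve_left (Nat.cast_ne_zero.2 r.den_ne_zero))
  rw [hint, hzero, Int.cast_zero]

lemma dvd_lcmUpto {m n : ℕ} (hm : m ≠ 0) (hmn : m ≤ n) : m ∣ Nat.lcmUpto n :=
  Finset.dvd_lcm (f := id) (mem_Icc.2 ⟨Nat.one_le_iff_ne_zero.2 hm, hmn⟩)

lemma lcmUpto_dvd_lcmUpto {m n : ℕ} (h : m ≤ n) : Nat.lcmUpto m ∣ Nat.lcmUpto n :=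
  Finset.lcm_mono (Icc_subset_Icc_right h)

-- By Kummer's theorem `p ^ i` contributes to `n.choose m` only through a carry at the `i`-th digit,
-- which cannot occur when `p ^ i ∣ m`.
lemma mul_choose_dvd_lcmUpto {m n : ℕ} (hm : m ≠ 0) (hmn : m ≤ n) :
    m * n.choose m ∣ Nat.lcmUpto n := by
  have hchoose : n.choose m ≠ 0 := (Nat.choose_pos hmn).ne'
  refine (Nat.factorization_prime_le_iff_dvd (mul_ne_zero hm hchoose)
    (Nat.lcmUpto_ne_zero n)).1 fun p hp ↦ ?_
  have hdisj : Disjoint {i ∈ Ico 1 (p.log n + 1) | p ^ i ∣ m}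
      {i ∈ Ico 1 (p.log n + 1) | p ^ i ≤ m % p ^ i + (n - m) % p ^ i} := by
    simp +contextual [Finset.disjoint_left, Nat.dvd_iff_mod_eq_zero,
      Nat.mod_lt _ (pow_pos hp.pos _)]
  rw [Nat.factorization_mul hm hchoose, Finsupp.add_apply,
    Nat.factorization_eq_card_pow_dvd_of_lt hp hm.bot_lt
      (hmn.trans_lt (Nat.lt_pow_succ_log_self hp.one_lt n)),
    Nat.factorization_choose hp hmn (Nat.lt_succ_self _), Nat.factorization_lcmUpto n hp,
    ← card_union_of_disjoint hdisj, filter_union_right]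
  exact (card_filter_le _ _).trans_eq (Nat.card_Ico _ _)

/-! ### An upper bound for Chebyshev's function -/

section Chebyshev

open Real
open ArithmeticFunction hiding log

lemma log_factorial_eq_sum_vonMangoldt_mul_div {n N : ℕ} (h : n ≤ N) :
    log n.factorial = ∑ d ∈ Ioc 0 N, Λ d * (n / d : ℕ) := by
  calc log n.factorial = ∑ d ∈ Ioc 0 n, log d := by
        rw [← log_prod fun d hd ↦ Nat.cast_ne_zero.2 (mem_Ioc.1 hd).1.ne', ← Nat.cast_prod,
          ← prod_Ico_id_eq_factorial]
        rfl
    _ = ∑ d ∈ Ioc 0 n, Λ d * (n / d : ℕ) := by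
        simpa only [vonMangoldt_mul_zeta, ArithmeticFunction.log_apply] using
          sum_Ioc_mul_zeta_eq_sum Λ n
    _ = ∑ d ∈ Ioc 0 N, Λ d * (n / d : ℕ) :=
        sum_subset (Ioc_subset_Ioc_right h) fun d hd hdn ↦ by
          simp only [mem_Ioc, not_and, not_le] at hd hdn
          rw [Nat.div_eq_of_lt (hdn hd.1), Nat.cast_zero, mul_zero]

lemma psi_natCast_eq_sum_vonMangoldt_mul_ite {n N : ℕ} (h : n ≤ N) :
    Chebyshev.psi n = ∑ d ∈ Ioc 0 N, Λ d * if d ≤ n then 1 else 0 := by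
  simp only [Chebyshev.psi, Nat.floor_natCast, mul_ite, mul_one, mul_zero, ← sum_filter]
  congr 1
  ext d
  simp only [mem_Ioc, mem_filter]
  lia

lemma one_add_sum_sylvester_div_le {q : ℕ} (hq : q ≠ 0) :
    1 + q / 2 + q / 3 + q / 7 + q / 42 ≤ q + if 42 ≤ q then 1 else 0 := by
  split_ifs with h
  · lia
  · push Not at h
    interval_cases q <;> first | contradiction | decide

lemma psi_le_psi_div_add_log_factorial (n : ℕ) :
    Chebyshev.psi n ≤ Chebyshev.psi (n / 42 : ℕ) + (log n.factorial - log (n / 2).factorial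
      - log (n / 3).factorial - log (n / 7).factorial - log (n / 42).factorial) := by
  have hdiv (k : ℕ) : n / k ≤ n := Nat.div_le_self n k
  rw [log_factorial_eq_sum_vonMangoldt_mul_div (le_refl n),
    log_factorial_eq_sum_vonMangoldt_mul_div (hdiv 2),
    log_factorial_eq_sum_vonMangoldt_mul_div (hdiv 3),
    log_factorial_eq_sum_vonMangoldt_mul_div (hdiv 7),
    log_factorial_eq_sum_vonMangoldt_mul_div (hdiv 42),
    psi_natCast_eq_sum_vonMangoldt_mul_ite (le_refl n),
    psi_natCast_eq_sum_vonMangoldt_mul_ite (hdiv 42)]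
  simp only [← sum_sub_distrib, ← sum_add_distrib, ← mul_sub, ← mul_add]
  refine sum_le_sum fun d hd ↦ mul_le_mul_of_nonneg_left ?_ vonMangoldt_nonneg
  obtain ⟨hd₀, hdn⟩ := mem_Ioc.1 hd
  have hquot := one_add_sum_sylvester_div_le (Nat.div_pos hdn hd₀).ne'
  have hiff : 42 ≤ n / d ↔ d ≤ n / 42 := by
    rw [Nat.le_div_iff_mul_le hd₀, Nat.le_div_iff_mul_le (by norm_num), mul_comm]
  simp only [hiff, ← Nat.div_right_comm n _ d] at hquot
  have hcast : (1 + (n / 2 / d : ℕ) + (n / 3 / d : ℕ) + (n / 7 / d : ℕ) + (n / 42 / d : ℕ) : ℝ)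
      ≤ (n / d : ℕ) + if d ≤ n / 42 then 1 else 0 := by
    exact_mod_cast hquot
  rw [if_pos hdn]
  linarith

lemma log_factorial_le_stirling {n : ℕ} (hn : n ≠ 0) :
    log n.factorial ≤ n * log n - n + log n / 2 + 1 := by
  obtain ⟨m, rfl⟩ := Nat.exists_eq_succ_of_ne_zero hn
  have h := Stirling.log_stirlingSeq'_antitone m.zero_le
  have hm : ((m + 1 : ℕ) : ℝ) ≠ 0 := by positivity
  simp only [Function.comp_apply, Nat.succ_eq_add_one, zero_add, Stirling.stirlingSeq_one,
    Stirling.log_stirlingSeq_formula] at h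
  rw [log_mul two_ne_zero hm, log_div hm (exp_pos 1).ne', log_div (exp_pos 1).ne' (by positivity),
    log_sqrt zero_le_two, log_exp] at h
  linarith

lemma mul_log_sub_self_le_log_factorial {n : ℕ} (hn : n ≠ 0) :
    n * log n - n ≤ log n.factorial := by
  have hstirling := Stirling.le_log_factorial_stirling hn
  have hlog : 0 ≤ log n := log_natCast_nonneg n
  have hpi : 0 ≤ log (2 * π) := log_nonneg (by linarith [pi_gt_three])
  linarith

lemma monotoneOn_mul_log_sub_self : MonotoneOn (fun x ↦ x * log x - x) (Set.Ici 1) := by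
  intro x (hx : 1 ≤ x) y (hy : 1 ≤ y) hxy
  have hlog := one_sub_inv_le_log_of_pos (x := y / x) (by positivity)
  rw [log_div (by positivity) (by positivity), inv_div, one_sub_div (by positivity),
    div_le_iff₀ (by positivity)] at hlog
  have hmul : 0 ≤ (y - x) * log x := mul_nonneg (sub_nonneg.2 hxy) (log_nonneg hx)
  simp only
  linarith

lemma mul_log_sub_self_sub_log_le_log_factorial_floor {x : ℝ} (hx : 1 ≤ x) :
    x * log x - x - log (x + 1) ≤ log ⌊x⌋₊.factorial := by
  have hfloor : x ≤ (⌊x⌋₊ + 1 : ℕ) := by exact_mod_cast (Nat.lt_floor_add_one x).le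
  have hlog : log (⌊x⌋₊ + 1 : ℕ) ≤ log (x + 1) :=
    log_le_log (by positivity) (by push_cast; linarith [Nat.floor_le (zero_le_one.trans hx)])
  have hmono := monotoneOn_mul_log_sub_self hx (hx.trans hfloor) hfloor
  have hfact := mul_log_sub_self_le_log_factorial (Nat.succ_ne_zero ⌊x⌋₊)
  rw [Nat.factorial_succ, Nat.cast_mul, log_mul (by positivity) (by positivity)] at hfact
  simp only at hmono
  linarith

lemma le_log_factorial_div {n k : ℕ} (hk : 2 ≤ k) (hkn : k ≤ n) :
    (n : ℝ) / k * (log n - log k) - n / k - log n ≤ log (n / k).factorial := by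
  have hk₀ : (0 : ℝ) < k := by positivity
  have hk₂ : (2 : ℝ) ≤ k := by exact_mod_cast hk
  have hn : (k : ℝ) ≤ n := by exact_mod_cast hkn
  have h := mul_log_sub_self_sub_log_le_log_factorial_floor ((one_le_div hk₀).2 hn)
  have hlog : log ((n : ℝ) / k + 1) ≤ log n := by
    refine log_le_log (by positivity) ?_
    rw [div_add_one hk₀.ne', div_le_iff₀ hk₀]
    nlinarith
  rw [Nat.floor_div_eq_div, log_div (hk₀.trans_le hn).ne' hk₀.ne'] at h
  linarith

lemma sum_sylvester_log_div_le :
    log 2 / 2 + log 3 / 3 + log 7 / 7 + log 42 / 42 ≤ 1.09 := by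
  have h₃ : 5 * log 3 ≤ 8 * log 2 := by
    simpa only [log_pow, Nat.cast_ofNat] using
      log_le_log (by norm_num) (show (3 : ℝ) ^ 5 ≤ 2 ^ 8 by norm_num)
  have h₇ : 6 * log 7 ≤ 17 * log 2 := by
    simpa only [log_pow, Nat.cast_ofNat] using
      log_le_log (by norm_num) (show (7 : ℝ) ^ 6 ≤ 2 ^ 17 by norm_num)
  have h₄₂ : log 42 = log 2 + log 3 + log 7 := by
    rw [← log_mul (by norm_num) (by norm_num), ← log_mul (by norm_num) (by norm_num)]
    norm_num
  linarith [log_two_lt_d9]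

lemma psi_le_psi_div_add {n : ℕ} (hn : 42 ≤ n) :
    Chebyshev.psi n ≤ Chebyshev.psi (n / 42 : ℕ) + 1.09 * n + (5 * log n + 1) := by
  have h₁ := log_factorial_le_stirling (n := n) (by lia)
  have h₂ := le_log_factorial_div (n := n) (k := 2) (by lia) (by lia)
  have h₃ := le_log_factorial_div (n := n) (k := 3) (by lia) (by lia)
  have h₇ := le_log_factorial_div (n := n) (k := 7) (by lia) (by lia)
  have h₄₂ := le_log_factorial_div (n := n) (k := 42) (by lia) hn
  have hconst := mul_le_mul_of_nonneg_left
    sum_sylvester_log_div_le n.cast_nonneg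
  push_cast at h₂ h₃ h₇ h₄₂
  linarith [psi_le_psi_div_add_log_factorial n, log_natCast_nonneg n]

lemma exists_forall_psi_le : ∃ C : ℝ, ∀ n : ℕ, Chebyshev.psi n ≤ 1.15 * n + C := by
  have herr : ∀ᶠ n : ℕ in atTop, 5 * log n + 1 ≤ 0.02 * n := by
    have hlog := (isLittleO_log_id_atTop.comp_tendsto tendsto_natCast_atTop_atTop).bound
      (show (0 : ℝ) < 0.002 by norm_num)
    filter_upwards [hlog, eventually_ge_atTop 100] with n hn hn₁₀₀
    have : (100 : ℝ) ≤ n := by exact_mod_cast hn₁₀₀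
    simp only [Function.comp_apply, id_eq, norm_eq_abs, Nat.abs_cast] at hn
    linarith [le_abs_self (log n)]
  obtain ⟨N, hN⟩ := eventually_atTop.1 herr
  refine ⟨Chebyshev.psi (N + 42 : ℕ), fun n ↦ ?_⟩
  induction n using Nat.strong_induction_on with
  | _ n ih =>
    rcases Nat.lt_or_ge n (N + 42) with hn | hn
    · have hmono := Chebyshev.psi_mono (Nat.cast_le.2 hn.le)
      linarith [n.cast_nonneg (α := ℝ)]
    · have hdiv : ((n / 42 : ℕ) : ℝ) ≤ n / 42 := Nat.cast_div_le
      linarith [psi_le_psi_div_add (n := n) (by lia), hN n (by lia),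
        ih (n / 42) (Nat.div_lt_self (by lia) (by norm_num))]

lemma exists_forall_lcmUpto_le :
    ∃ K : ℝ, ∀ n, (Nat.lcmUpto n : ℝ) ≤ K * exp 1.15 ^ n := by
  obtain ⟨C, hC⟩ := exists_forall_psi_le
  refine ⟨exp C, fun n ↦ ?_⟩
  have hpos : (0 : ℝ) < Nat.lcmUpto n := by exact_mod_cast Nat.lcmUpto_pos n
  rw [← exp_nat_mul, ← exp_add, ← log_le_iff_le_exp hpos, ← Chebyshev.psi_eq_log_lcmUpto]
  linarith [hC n]

end Chebyshev

/-! ### Apéry's recurrence -/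

namespace Apery

/-- The product `C(n, k) C(n + k, k)` of binomial coefficients from which Apéry's sequences are
built. -/
def weight (n k : ℕ) : ℕ := n.choose k * (n + k).choose k

@[simp]
lemma weight_zero_right (n : ℕ) : weight n 0 = 1 := by simp [weight]

lemma weight_eq_zero_of_lt {n k : ℕ} (h : n < k) : weight n k = 0 := by
  simp [weight, Nat.choose_eq_zero_of_lt h]

lemma weight_pos {n k : ℕ} (h : k ≤ n) : 0 < weight n k :=
  Nat.mul_pos (Nat.choose_pos h) (Nat.choose_pos (Nat.le_add_left k n))

lemma weight_mono_left (k : ℕ) : Monotone (weight · k) := fun _ _ h ↦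
  Nat.mul_le_mul (Nat.choose_le_choose k h) (Nat.choose_le_choose k (Nat.add_le_add_right h k))

lemma succ_le_weight {n k : ℕ} (hk : k ≠ 0) (hkn : k ≤ n) : n + 1 ≤ weight n k :=
  calc n + 1 = (n + 1).choose n := by simp
    _ ≤ (n + k).choose n := Nat.choose_le_choose n (by lia)
    _ = (n + k).choose k := Nat.choose_symm_add
    _ ≤ weight n k := Nat.le_mul_of_pos_left _ (Nat.choose_pos hkn)

lemma cast_weight_succ_succ (n k : ℕ) :
    (weight (n + 1) (k + 1) : ℝ) = (n + k + 1) * (n + k + 2) * weight n k / (k + 1) ^ 2 := by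
  have h₁ : (n + 1) * (n.choose k : ℝ) = (n + 1).choose (k + 1) * (k + 1) := by
    exact_mod_cast Nat.add_one_mul_choose_eq n k
  have h₂ : (n + k + 2) * ((n + k + 1).choose k : ℝ) = (n + k + 2).choose (k + 1) * (k + 1) := by
    exact_mod_cast Nat.add_one_mul_choose_eq (n + k + 1) k
  have h₃ : ((n + k).choose k : ℝ) * (n + k + 1) = (n + k + 1).choose k * (n + 1) := by
    have := Nat.choose_mul_succ_eq (n + k) k
    rw [show n + k + 1 - k = n + 1 by lia] at this
    exact_mod_cast this
  rw [eq_div_iff (by positivity), weight, weight, show n + 1 + (k + 1) = n + k + 2 by ring]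
  push_cast
  linear_combination -(k + 1) * ((n + k + 2).choose (k + 1) : ℝ) * h₁
    - (n + 1) * (n.choose k : ℝ) * h₂ - (n + k + 2) * (n.choose k : ℝ) * h₃

lemma cast_weight_succ_right (n k : ℕ) :
    (weight n (k + 1) : ℝ) = (n - k) * (n + k + 1) * weight n k / (k + 1) ^ 2 := by
  rcases lt_or_ge n k with h | h
  · simp [weight_eq_zero_of_lt h, weight_eq_zero_of_lt (h.trans k.lt_succ_self)]
  have h₁ : (n.choose (k + 1) : ℝ) * (k + 1) = n.choose k * (n - k) := by
    rw [← Nat.cast_sub h]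
    exact_mod_cast Nat.choose_succ_right_eq n k
  have h₂ : (n + k + 1) * ((n + k).choose k : ℝ) = (n + k + 1).choose (k + 1) * (k + 1) := by
    exact_mod_cast Nat.add_one_mul_choose_eq (n + k) k
  rw [eq_div_iff (by positivity), weight, weight, ← add_assoc]
  push_cast
  linear_combination (k + 1) * ((n + k + 1).choose (k + 1) : ℝ) * h₁
    - (n - k) * (n.choose k : ℝ) * h₂

lemma cast_weight_right_succ_of_succ_left (n k : ℕ) :
    (weight n (k + 1) : ℝ) = (n + 1 - k) * (n - k) * weight (n + 1) k / (k + 1) ^ 2 := by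
  have h₁ := cast_weight_succ_right (n + 1) k
  have h₂ := cast_weight_succ_succ n k
  have h₃ := cast_weight_succ_right n k
  rw [h₁] at h₂
  push_cast at h₂
  field_simp at h₂
  have hpos : (n + k + 2 : ℝ) ≠ 0 := by positivity
  rw [h₃]
  congr 1
  apply mul_left_cancel₀ hpos
  linear_combination -(n - k : ℝ) * h₂

/-- Apéry's recurrence operator. Its value at `n` involves the terms of index `n`, `n + 1` and
`n + 2`, with no index shifted down, to stay clear of truncated subtraction. -/
def recurrence (u : ℕ → ℝ) (n : ℕ) : ℝ :=
  (n + 2) ^ 3 * u (n + 2) - (2 * n + 3) * (17 * (n + 1) ^ 2 + 17 * (n + 1) + 5) * u (n + 1)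
    + (n + 1) ^ 3 * u n

lemma recurrence_sum {ι : Type*} (s : Finset ι) (f : ℕ → ι → ℝ) (n : ℕ) :
    recurrence (fun m ↦ ∑ i ∈ s, f m i) n = ∑ i ∈ s, recurrence (f · i) n := by
  simp only [recurrence, sum_add_distrib, sum_sub_distrib, mul_sum]

lemma recurrence_sum_range_eq_zero_of_telescoping {f : ℕ → ℕ → ℝ} {g : ℕ → ℝ} {n : ℕ}
    (hf : ∀ m k, m < k → f m k = 0) (hzero : recurrence (f · 0) n = g 0)
    (hsucc : ∀ k, recurrence (f · (k + 1)) n = g (k + 1) - g k) (hg : g (n + 2) = 0) :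
    recurrence (fun m ↦ ∑ k ∈ range (m + 1), f m k) n = 0 := by
  have extend {m : ℕ} (hm : m ≤ n + 2) :
      ∑ k ∈ range (m + 1), f m k = ∑ k ∈ range (n + 3), f m k :=
    sum_subset (range_subset_range.2 (by lia)) fun k _ hk ↦ hf m k (by simpa using hk)
  calc recurrence (fun m ↦ ∑ k ∈ range (m + 1), f m k) n
      = recurrence (fun m ↦ ∑ k ∈ range (n + 3), f m k) n := by
        simp only [recurrence, extend le_rfl, extend (show n + 1 ≤ n + 2 by lia),
          extend (show n ≤ n + 2 by lia)]
    _ = ∑ k ∈ range (n + 2), (g (k + 1) - g k) + g 0 := by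
        rw [recurrence_sum, sum_range_succ']
        simp only [hzero, hsucc]
    _ = 0 := by rw [sum_range_sub, hg]; ring

lemma casoratian_eq_of_recurrence_eq_zero {u v : ℕ → ℝ} (hu : ∀ n, recurrence u n = 0)
    (hv : ∀ n, recurrence v n = 0) (n : ℕ) :
    ((n : ℝ) + 1) ^ 3 * (u (n + 1) * v n - u n * v (n + 1)) = u 1 * v 0 - u 0 * v 1 := by
  induction n with
  | zero => simp
  | succ n ih =>
    have hun := hu n
    have hvn := hv n
    rw [recurrence] at hun hvn
    push_cast
    linear_combination ih + v (n + 1) * hun - u (n + 1) * hvn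

/-- Apéry's sequence `b n`, the denominators of the approximations to `ζ(3)`. -/
def denom (n : ℕ) : ℕ := ∑ k ∈ range (n + 1), weight n k ^ 2

/-- The rational function `R` such that `R n k * weight (n + 1) k ^ 2` telescopes the recurrence
operator applied to `weight · k ^ 2` (Zagier's certificate). -/
def certificate (n k : ℕ) : ℝ := 4 * (2 * n + 3) * (k * (2 * k + 1) - (2 * n + 3) ^ 2)

lemma recurrence_weight_sq (n k : ℕ) :
    recurrence (fun m ↦ (weight m (k + 1) : ℝ) ^ 2) n
      = certificate n (k + 1) * weight (n + 1) (k + 1) ^ 2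
        - certificate n k * weight (n + 1) k ^ 2 := by
  rw [recurrence, cast_weight_succ_succ (n + 1), cast_weight_succ_right (n + 1),
    cast_weight_right_succ_of_succ_left, certificate, certificate]
  push_cast
  field_simp
  ring

theorem recurrence_denom (n : ℕ) : recurrence (fun m ↦ (denom m : ℝ)) n = 0 := by
  simp only [denom, Nat.cast_sum, Nat.cast_pow]
  refine recurrence_sum_range_eq_zero_of_telescoping
    (g := fun k ↦ certificate n k * weight (n + 1) k ^ 2) ?_ ?_ (recurrence_weight_sq n) ?_
  · intro m k h
    simp [weight_eq_zero_of_lt h]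
  · simp only [recurrence, certificate, weight_zero_right]
    push_cast
    ring
  · simp [weight_eq_zero_of_lt (Nat.lt_succ_self (n + 1))]

/-- Apéry's double sequence `c n k`, whose rows converge to `ζ(3)` uniformly in `k ≤ n`. -/
noncomputable def coeff (n k : ℕ) : ℝ :=
  ∑ m ∈ range n, 1 / ((m : ℝ) + 1) ^ 3
    + ∑ m ∈ range k, (-1) ^ m / (2 * ((m : ℝ) + 1) ^ 3 * weight n (m + 1))

lemma coeff_succ_right (n k : ℕ) :
    coeff n (k + 1) = coeff n k + (-1) ^ k / (2 * ((k : ℝ) + 1) ^ 3 * weight n (k + 1)) := by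
  rw [coeff, coeff, sum_range_succ, add_assoc]

lemma coeff_succ_left {n k : ℕ} (h : k ≤ n) :
    coeff (n + 1) k
      = coeff n k + (-1) ^ k / (((n : ℝ) + 1) ^ 2 * (n + 1 - k) * weight (n + 1) k) := by
  induction k with
  | zero =>
    simp only [coeff, sum_range_succ, sum_range_zero, weight_zero_right]
    push_cast
    ring
  | succ k ih =>
    have hkn : (k : ℝ) + 1 ≤ n := by exact_mod_cast h
    have hw : (weight (n + 1) k : ℝ) ≠ 0 := by exact_mod_cast (weight_pos (by lia)).ne'
    have h₀ : (n : ℝ) - k ≠ 0 := by linarith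
    have h₁ : (n : ℝ) + 1 - k ≠ 0 := by linarith
    have h₂ : (n : ℝ) + 1 - (k + 1) ≠ 0 := by linarith
    rw [coeff_succ_right, coeff_succ_right, ih (by lia), cast_weight_succ_right (n + 1),
      cast_weight_right_succ_of_succ_left, pow_succ]
    push_cast
    field_simp
    ring

lemma weight_sq_mul_coeff_succ_right (n k : ℕ) :
    (weight n (k + 1) : ℝ) ^ 2 * coeff n (k + 1)
      = weight n (k + 1) ^ 2 * coeff n k
        + weight n (k + 1) * (-1) ^ k / (2 * ((k : ℝ) + 1) ^ 3) := by
  rcases eq_or_ne (weight n (k + 1) : ℝ) 0 with h | h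
  · simp [h]
  · rw [coeff_succ_right]
    field_simp

lemma weight_sq_mul_coeff_succ_succ (n k : ℕ) :
    (weight (n + 1) (k + 1) : ℝ) ^ 2 * coeff (n + 1) (k + 1)
      = weight (n + 1) (k + 1) ^ 2 * coeff n k
        + weight (n + 1) (k + 1) * (-1) ^ k
          * ((n + k + 2) / ((n + 1) ^ 2 * (k + 1) ^ 2) + 1 / (2 * (k + 1) ^ 3)) := by
  rcases lt_or_ge n k with h | h
  · simp [weight_eq_zero_of_lt (Nat.succ_lt_succ h)]
  have hkn : (k : ℝ) ≤ n := by exact_mod_cast h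
  have hw : (weight (n + 1) k : ℝ) ≠ 0 := by exact_mod_cast (weight_pos (by lia)).ne'
  have h₁ : (n : ℝ) + 1 - k ≠ 0 := by linarith
  rw [weight_sq_mul_coeff_succ_right, coeff_succ_left h, cast_weight_succ_right (n + 1)]
  push_cast
  field_simp
  ring

lemma weight_sq_mul_coeff_right_succ (n k : ℕ) :
    (weight n (k + 1) : ℝ) ^ 2 * coeff n (k + 1)
      = weight n (k + 1) ^ 2 * coeff (n + 1) k
        + weight n (k + 1) * (-1) ^ k
          * (1 / (2 * (k + 1) ^ 3) - (n - k) / ((n + 1) ^ 2 * (k + 1) ^ 2)) := by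
  rcases lt_or_ge n (k + 1) with h | h
  · simp [weight_eq_zero_of_lt h]
  have hkn : (k : ℝ) + 1 ≤ n := by exact_mod_cast h
  have hw : (weight (n + 1) k : ℝ) ≠ 0 := by exact_mod_cast (weight_pos (by lia)).ne'
  have h₀ : (n : ℝ) - k ≠ 0 := by linarith
  have h₁ : (n : ℝ) + 1 - k ≠ 0 := by linarith
  rw [weight_sq_mul_coeff_succ_right, coeff_succ_left (by lia),
    cast_weight_right_succ_of_succ_left]
  field_simp
  ring

/-- Apéry's sequence `a n`, the numerators (up to a common denominator) of the approximations to
`ζ(3)`. -/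
noncomputable def numer (n : ℕ) : ℝ := ∑ k ∈ range (n + 1), (weight n k : ℝ) ^ 2 * coeff n k

/-- The telescoping sequence for `weight · k ^ 2 * coeff · k` under the recurrence operator. -/
noncomputable def telescoper (n k : ℕ) : ℝ :=
  certificate n k * (weight (n + 1) k ^ 2 * coeff (n + 1) k)
    - 5 * (2 * n + 3) * (-1) ^ k * k / ((n + 1) * (n + 2)) * weight (n + 1) k

lemma recurrence_weight_sq_mul_coeff_zero (n : ℕ) :
    recurrence (fun m ↦ (weight m 0 : ℝ) ^ 2 * coeff m 0) n = telescoper n 0 := by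
  simp only [recurrence, telescoper, certificate, coeff_succ_left (Nat.zero_le _),
    weight_zero_right]
  push_cast
  have : (n : ℝ) + 1 + 1 ≠ 0 := by positivity
  simp only [sub_zero]
  field_simp
  ring

lemma recurrence_weight_sq_mul_coeff_succ (n k : ℕ) :
    recurrence (fun m ↦ (weight m (k + 1) : ℝ) ^ 2 * coeff m (k + 1)) n
      = telescoper n (k + 1) - telescoper n k := by
  rw [recurrence, telescoper, telescoper, weight_sq_mul_coeff_succ_succ (n + 1),
    weight_sq_mul_coeff_succ_right (n + 1), weight_sq_mul_coeff_right_succ,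
    cast_weight_succ_succ (n + 1), cast_weight_succ_right (n + 1),
    cast_weight_right_succ_of_succ_left, certificate, certificate, pow_succ]
  push_cast
  field_simp
  ring

theorem recurrence_numer (n : ℕ) : recurrence numer n = 0 :=
  recurrence_sum_range_eq_zero_of_telescoping (g := telescoper n)
    (fun m k h ↦ by simp [weight_eq_zero_of_lt h]) (recurrence_weight_sq_mul_coeff_zero n)
    (recurrence_weight_sq_mul_coeff_succ n)
    (by simp [telescoper, weight_eq_zero_of_lt (Nat.lt_succ_self (n + 1))])

/-! ### Growth and convergence -/

lemma denom_zero : denom 0 = 1 := by simp [denom]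

lemma denom_mono : Monotone denom := fun m n h ↦
  calc denom m ≤ ∑ k ∈ range (m + 1), weight n k ^ 2 :=
        sum_le_sum fun k _ ↦ Nat.pow_le_pow_left (weight_mono_left k h) 2
    _ ≤ denom n := sum_le_sum_of_subset (range_subset_range.2 (Nat.succ_le_succ h))

lemma denom_pos (n : ℕ) : 0 < denom n := one_pos.trans_le (denom_zero ▸ denom_mono n.zero_le)

lemma cast_denom_pos (n : ℕ) : (0 : ℝ) < denom n := Nat.cast_pos.2 (denom_pos n)

lemma numer_zero : numer 0 = 0 := by simp [numer, coeff]

lemma numer_one : numer 1 = 6 := by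
  norm_num [numer, coeff, weight, sum_range_succ]

lemma thirty_two_mul_denom_succ_le {n : ℕ} (hn : 50 ≤ n) :
    32 * denom (n + 1) ≤ denom (n + 2) := by
  have hrec := recurrence_denom n
  have hmono : (denom n : ℝ) ≤ denom (n + 1) := by exact_mod_cast denom_mono n.le_succ
  have hn' : (50 : ℝ) ≤ n := by exact_mod_cast hn
  rw [recurrence] at hrec
  have hpoly : 32 * ((n : ℝ) + 2) ^ 3
      ≤ (2 * n + 3) * (17 * (n + 1) ^ 2 + 17 * (n + 1) + 5) - (n + 1) ^ 3 := by
    nlinarith [mul_nonneg (sq_nonneg (n : ℝ)) (sub_nonneg.2 hn')]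
  have hpoly' := mul_le_mul_of_nonneg_right hpoly (cast_denom_pos (n + 1)).le
  have hmono' := mul_le_mul_of_nonneg_left hmono (by positivity : (0 : ℝ) ≤ (n + 1) ^ 3)
  have hmul : ((n : ℝ) + 2) ^ 3 * (32 * denom (n + 1)) ≤ (n + 2) ^ 3 * denom (n + 2) := by
    linarith
  exact_mod_cast le_of_mul_le_mul_left hmul (by positivity)

lemma thirty_two_pow_le (n : ℕ) : 32 ^ n ≤ 32 ^ 51 * denom n := by
  rcases le_total n 51 with h | h
  · exact (Nat.pow_le_pow_right (by norm_num) h).trans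
      (Nat.le_mul_of_pos_right _ (denom_pos n))
  · induction n, h using Nat.le_induction with
    | base => exact Nat.le_mul_of_pos_right _ (denom_pos 51)
    | succ n hn ih =>
      obtain ⟨n, rfl⟩ := Nat.exists_eq_add_of_le' (show 1 ≤ n by lia)
      rw [pow_succ]
      have := thirty_two_mul_denom_succ_le (n := n) (by lia)
      lia

lemma summable_one_div_succ_pow_three : Summable fun i : ℕ ↦ 1 / ((i : ℝ) + 1) ^ 3 := by
  simpa using (summable_nat_add_iff 1).2 (Real.summable_one_div_nat_pow.2 (by norm_num : 1 < 3))

lemma sum_one_div_succ_pow_three_le_zeta3 (s : Finset ℕ) :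
    ∑ i ∈ s, 1 / ((i : ℝ) + 1) ^ 3 ≤ zeta3 :=
  summable_one_div_succ_pow_three.sum_le_tsum s fun i _ ↦ by positivity

lemma abs_coeff_sub_sum_le {n k : ℕ} (hk : k ≤ n) :
    |coeff n k - ∑ m ∈ range n, 1 / ((m : ℝ) + 1) ^ 3| ≤ zeta3 / (n + 1) := by
  rw [coeff, add_sub_cancel_left]
  calc |∑ m ∈ range k, (-1 : ℝ) ^ m / (2 * (m + 1) ^ 3 * weight n (m + 1))|
      ≤ ∑ m ∈ range k, 1 / ((m : ℝ) + 1) ^ 3 / (n + 1) := by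
        refine (abs_sum_le_sum_abs _ _).trans (sum_le_sum fun m hm ↦ ?_)
        have hw : (n : ℝ) + 1 ≤ weight n (m + 1) := by
          exact_mod_cast succ_le_weight m.succ_ne_zero
            ((Nat.succ_le_of_lt (mem_range.1 hm)).trans hk)
        rw [abs_div, abs_neg_one_pow, abs_of_nonneg (by positivity), div_div]
        gcongr
        linarith [show (0 : ℝ) ≤ (m + 1) ^ 3 by positivity]
    _ ≤ zeta3 / (n + 1) := by
        rw [← sum_div]
        gcongr
        exact sum_one_div_succ_pow_three_le_zeta3 _

lemma tendsto_numer_div_denom : Tendsto (fun n ↦ numer n / denom n) atTop (𝓝 zeta3) := by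
  have herr : Tendsto (fun n : ℕ ↦ zeta3 / ((n : ℝ) + 1)) atTop (𝓝 0) := by
    simpa only [mul_one_div, mul_zero] using
      tendsto_one_div_add_atTop_nhds_zero_nat.const_mul zeta3
  have hsum := summable_one_div_succ_pow_three.hasSum.tendsto_sum_nat
  refine hsum.congr_dist (squeeze_zero (fun _ ↦ dist_nonneg) (fun n ↦ ?_) herr)
  have hb := cast_denom_pos n
  have havg : numer n / denom n - ∑ m ∈ range n, 1 / ((m : ℝ) + 1) ^ 3
      = (∑ k ∈ range (n + 1), (weight n k : ℝ) ^ 2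
        * (coeff n k - ∑ m ∈ range n, 1 / ((m : ℝ) + 1) ^ 3)) / denom n := by
    rw [div_sub' hb.ne']
    simp only [numer, denom, mul_sub, sum_sub_distrib, ← sum_mul, Nat.cast_sum, Nat.cast_pow]
  rw [dist_comm, Real.dist_eq, havg, abs_div, abs_of_pos hb, div_le_iff₀ hb, denom, Nat.cast_sum,
    mul_sum]
  refine (abs_sum_le_sum_abs _ _).trans (sum_le_sum fun k hk ↦ ?_)
  rw [abs_mul, abs_of_nonneg (by positivity), mul_comm, Nat.cast_pow]
  gcongr
  exact abs_coeff_sub_sum_le (Nat.lt_succ_iff.1 (mem_range.1 hk))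

lemma numer_div_denom_succ_sub (n : ℕ) :
    numer (n + 1) / denom (n + 1) - numer n / denom n
      = 6 / (((n : ℝ) + 1) ^ 3 * denom (n + 1) * denom n) := by
  have hcas := casoratian_eq_of_recurrence_eq_zero recurrence_numer recurrence_denom n
  rw [numer_zero, numer_one, denom_zero] at hcas
  have h₀ := cast_denom_pos n
  have h₁ := cast_denom_pos (n + 1)
  field_simp
  linear_combination hcas

lemma strictMono_numer_div_denom : StrictMono fun n ↦ numer n / denom n := by
  refine strictMono_nat_of_lt_succ fun n ↦ sub_pos.1 ?_
  have h₀ := cast_denom_pos n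
  have h₁ := cast_denom_pos (n + 1)
  rw [numer_div_denom_succ_sub]
  positivity

lemma numer_div_denom_sub_le {n N : ℕ} (h : n ≤ N) :
    numer N / denom N - numer n / denom n ≤ 6 * zeta3 / denom n ^ 2 := by
  have hb := cast_denom_pos n
  calc numer N / denom N - numer n / denom n
      = ∑ i ∈ Ico n N, 6 / (((i : ℝ) + 1) ^ 3 * denom (i + 1) * denom i) := by
        rw [← sum_Ico_sub (fun i ↦ numer i / denom i) h]
        simp only [numer_div_denom_succ_sub]
    _ ≤ ∑ i ∈ Ico n N, 6 / (denom n : ℝ) ^ 2 * (1 / ((i : ℝ) + 1) ^ 3) := by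
        refine sum_le_sum fun i hi ↦ ?_
        have hni := (mem_Ico.1 hi).1
        have h₀ : (denom n : ℝ) ≤ denom i := by exact_mod_cast denom_mono hni
        have h₁ : (denom n : ℝ) ≤ denom (i + 1) := by
          exact_mod_cast denom_mono (hni.trans i.le_succ)
        rw [div_mul_div_comm, mul_one, mul_assoc, mul_comm (_ ^ 2), sq]
        gcongr
    _ ≤ 6 / (denom n : ℝ) ^ 2 * zeta3 := by
        rw [← mul_sum]
        gcongr
        exact sum_one_div_succ_pow_three_le_zeta3 _
    _ = 6 * zeta3 / denom n ^ 2 := div_mul_eq_mul_div _ _ _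

lemma denom_mul_zeta3_sub_numer_pos (n : ℕ) : 0 < denom n * zeta3 - numer n := by
  have hlt : numer n / denom n < zeta3 := (strictMono_numer_div_denom n.lt_succ_self).trans_le
    (strictMono_numer_div_denom.monotone.ge_of_tendsto tendsto_numer_div_denom (n + 1))
  rw [div_lt_iff₀' (cast_denom_pos n)] at hlt
  exact sub_pos.2 hlt

lemma denom_mul_zeta3_sub_numer_le (n : ℕ) :
    denom n * zeta3 - numer n ≤ 6 * zeta3 / denom n := by
  have hb := cast_denom_pos n
  have hle : zeta3 - numer n / denom n ≤ 6 * zeta3 / denom n ^ 2 :=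
    le_of_tendsto (tendsto_numer_div_denom.sub_const _)
      ((eventually_ge_atTop n).mono fun _ ↦ numer_div_denom_sub_le)
  calc denom n * zeta3 - numer n = denom n * (zeta3 - numer n / denom n) := by field_simp
    _ ≤ denom n * (6 * zeta3 / denom n ^ 2) := by gcongr
    _ = 6 * zeta3 / denom n := by field_simp

/-! ### Integrality -/

lemma choose_add_mul_choose {n k m : ℕ} (h : m ≤ k) :
    (n + k).choose k * k.choose m = (n + m).choose m * (n + k).choose (k - m) := by
  have hmul := Nat.choose_mul (n := n + k) (k := n + m) (s := n) (by lia)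
  rw [show n + k - n = k by lia, show n + m - n = m by lia, Nat.choose_symm_add,
    Nat.choose_symm_add] at hmul
  rw [← hmul, mul_comm, Nat.choose_symm_of_eq_add (show n + k = n + m + (k - m) by lia)]

lemma pow_three_mul_weight_dvd {n k m : ℕ} (hm : m ≠ 0) (hmk : m ≤ k) (hkn : k ≤ n) :
    m ^ 3 * weight n m ∣ Nat.lcmUpto n ^ 3 * weight n k := by
  have hlcm : m * (m * n.choose m) * (m * k.choose m) ∣ Nat.lcmUpto n ^ 3 := by
    rw [pow_succ, sq]
    exact mul_dvd_mul (mul_dvd_mul (dvd_lcmUpto hm (hmk.trans hkn))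
      (mul_choose_dvd_lcmUpto hm (hmk.trans hkn)))
      ((mul_choose_dvd_lcmUpto hm hmk).trans (lcmUpto_dvd_lcmUpto hkn))
  refine Nat.dvd_of_mul_dvd_mul_right (Nat.choose_pos hmk) ?_
  calc m ^ 3 * weight n m * k.choose m
      = m * (m * n.choose m) * (m * k.choose m) * (n + m).choose m := by rw [weight]; ring
    _ ∣ Nat.lcmUpto n ^ 3 * ((n + m).choose m * (n + k).choose (k - m) * n.choose k) :=
      mul_dvd_mul hlcm (Dvd.intro _ (mul_assoc _ _ _).symm)
    _ = Nat.lcmUpto n ^ 3 * weight n k * k.choose m := by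
      rw [← choose_add_mul_choose hmk, weight]
      ring

lemma natCast_div_mem_range_intCast {a b : ℕ} (h : b ∣ a) :
    (a : ℝ) / b ∈ (Int.castRingHom ℝ).range := by
  rw [← Nat.cast_div_charZero h]
  exact natCast_mem _ _

lemma lcmUpto_pow_three_mul_sum_mem (n : ℕ) :
    (Nat.lcmUpto n : ℝ) ^ 3 * ∑ m ∈ range n, 1 / ((m : ℝ) + 1) ^ 3
      ∈ (Int.castRingHom ℝ).range := by
  rw [mul_sum]
  refine sum_mem fun m hm ↦ ?_
  have hdvd :=
    pow_dvd_pow_of_dvd (dvd_lcmUpto m.succ_ne_zero (Nat.succ_le_of_lt (mem_range.1 hm))) 3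
  rw [mul_one_div]
  exact_mod_cast natCast_div_mem_range_intCast hdvd

lemma two_mul_lcmUpto_pow_three_mul_weight_mul_coeff_mem {n k : ℕ} (hk : k ≤ n) :
    2 * (Nat.lcmUpto n : ℝ) ^ 3 * (weight n k * coeff n k) ∈ (Int.castRingHom ℝ).range := by
  have hsplit : 2 * (Nat.lcmUpto n : ℝ) ^ 3 * (weight n k * coeff n k)
      = (2 * weight n k : ℕ) * ((Nat.lcmUpto n : ℝ) ^ 3 * ∑ m ∈ range n, 1 / ((m : ℝ) + 1) ^ 3)
        + ∑ m ∈ range k, (-1) ^ m * (((Nat.lcmUpto n ^ 3 * weight n k : ℕ) : ℝ)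
          / ((m + 1) ^ 3 * weight n (m + 1) : ℕ)) := by
    rw [coeff, mul_add, mul_add]
    congr 1
    · push_cast
      ring
    · rw [mul_sum, mul_sum]
      refine sum_congr rfl fun m _ ↦ ?_
      push_cast
      rw [mul_assoc 2 (_ ^ 3) (weight n (m + 1) : ℝ), ← div_div]
      ring
  rw [hsplit]
  refine add_mem (mul_mem (natCast_mem _ _) (lcmUpto_pow_three_mul_sum_mem n))
    (sum_mem fun m hm ↦ mul_mem (pow_mem (neg_mem (one_mem _)) m) ?_)
  exact natCast_div_mem_range_intCast
    (pow_three_mul_weight_dvd m.succ_ne_zero (Nat.succ_le_of_lt (mem_range.1 hm)) hk)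

lemma exists_intCast_eq_two_mul_lcmUpto_pow_three_mul_numer (n : ℕ) :
    ∃ z : ℤ, (z : ℝ) = 2 * (Nat.lcmUpto n : ℝ) ^ 3 * numer n := by
  suffices h : 2 * (Nat.lcmUpto n : ℝ) ^ 3 * numer n ∈ (Int.castRingHom ℝ).range from h
  rw [numer, mul_sum]
  refine sum_mem fun k hk ↦ ?_
  rw [sq, mul_assoc (weight n k : ℝ), mul_left_comm]
  exact mul_mem (natCast_mem _ _)
    (two_mul_lcmUpto_pow_three_mul_weight_mul_coeff_mem (Nat.lt_succ_iff.1 (mem_range.1 hk)))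

/-! ### Irrationality -/

lemma exp_lt_thirty_two : Real.exp 3.45 < 32 := by
  rw [← Real.lt_log_iff_exp_lt (by norm_num), show (32 : ℝ) = 2 ^ 5 by norm_num, Real.log_pow]
  norm_num
  linarith [Real.log_two_gt_d9]

lemma tendsto_lcmUpto_pow_three_div_denom :
    Tendsto (fun n ↦ (Nat.lcmUpto n : ℝ) ^ 3 / denom n) atTop (𝓝 0) := by
  obtain ⟨K, hK⟩ := exists_forall_lcmUpto_le
  have hgeom : Tendsto (fun n ↦ K ^ 3 * 32 ^ 51 * (Real.exp 3.45 / 32) ^ n) atTop (𝓝 0) := by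
    simpa using (tendsto_pow_atTop_nhds_zero_of_lt_one (by positivity)
      ((div_lt_one (by norm_num)).2 exp_lt_thirty_two)).const_mul (K ^ 3 * 32 ^ 51)
  refine squeeze_zero (fun n ↦ by positivity) (fun n ↦ ?_) hgeom
  have hb := cast_denom_pos n
  have hdenom : (32 : ℝ) ^ n ≤ 32 ^ 51 * denom n := by exact_mod_cast thirty_two_pow_le n
  have hlcm : (Nat.lcmUpto n : ℝ) ^ 3 ≤ K ^ 3 * Real.exp 3.45 ^ n :=
    calc (Nat.lcmUpto n : ℝ) ^ 3 ≤ (K * Real.exp 1.15 ^ n) ^ 3 := by gcongr; exact hK n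
      _ = K ^ 3 * Real.exp 3.45 ^ n := by
        rw [mul_pow, pow_right_comm, ← Real.exp_nat_mul]
        norm_num
  rw [div_pow, div_le_iff₀ hb]
  calc (Nat.lcmUpto n : ℝ) ^ 3 ≤ K ^ 3 * Real.exp 3.45 ^ n := hlcm
    _ ≤ K ^ 3 * Real.exp 3.45 ^ n * (32 ^ 51 * denom n / 32 ^ n) :=
      le_mul_of_one_le_right ((by positivity : (0 : ℝ) ≤ _).trans hlcm)
        ((one_le_div (by positivity)).2 hdenom)
    _ = K ^ 3 * 32 ^ 51 * (Real.exp 3.45 ^ n / 32 ^ n) * denom n := by ring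

theorem irrational_zeta3 : Irrational zeta3 := by
  choose p hp using exists_intCast_eq_two_mul_lcmUpto_pow_three_mul_numer
  let q (n : ℕ) : ℤ := 2 * Nat.lcmUpto n ^ 3 * denom n
  have herr (n : ℕ) : q n * zeta3 - p n
      = 2 * Nat.lcmUpto n ^ 3 * (denom n * zeta3 - numer n) := by
    simp only [q, hp]
    push_cast
    ring
  have hpos (n : ℕ) : 0 < q n * zeta3 - p n := by
    have hlcm := Nat.lcmUpto_pos n
    have := denom_mul_zeta3_sub_numer_pos n
    rw [herr]
    positivity
  have hle (n : ℕ) : q n * zeta3 - p n ≤ 12 * zeta3 * (Nat.lcmUpto n ^ 3 / denom n) :=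
    calc q n * zeta3 - p n ≤ 2 * Nat.lcmUpto n ^ 3 * (6 * zeta3 / denom n) := by
          rw [herr]
          gcongr
          exact denom_mul_zeta3_sub_numer_le n
      _ = 12 * zeta3 * (Nat.lcmUpto n ^ 3 / denom n) := by ring
  have hlim : Tendsto (fun n ↦ 12 * zeta3 * (Nat.lcmUpto n ^ 3 / denom n)) atTop (𝓝 0) := by
    simpa using tendsto_lcmUpto_pow_three_div_denom.const_mul (12 * zeta3)
  exact irrational_of_frequently_ne_of_tendsto (Frequently.of_forall fun n ↦ (hpos n).ne')
    (squeeze_zero (fun n ↦ (hpos n).le) hle hlim)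

end Apery

/-- The real number ζ(3) is irrational: no rational number equals it. -/
theorem zeta_3_irrational : ¬ ∃ r : ℚ, zeta3 = (r : ℝ) := by
  rintro ⟨r, hr⟩
  exact Apery.irrational_zeta3 ⟨r, hr.symm⟩
end

section
/- Both sequences (a_n) and (b_n) satisfy, for all n ≥ 0, the second-order recurrence (n+2)³·y_{n+2} − (17n²+51n+39)·(2n+3)·y_{n+1} + (n+1)³·y_n = 0. -/
/-- `z n = ∑_{m=1}^n 1/m³`. -/
def zseq (n : ℕ) : ℚ := ∑ m ∈ Finset.Icc 1 n, 1 / (m : ℚ) ^ 3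

/-- `a n = ∑_{k=0}^n C(n,k)² C(n+k,k)²`. -/
def aseq (n : ℕ) : ℚ :=
  ∑ k ∈ Finset.range (n + 1), (n.choose k : ℚ) ^ 2 * ((n + k).choose k : ℚ) ^ 2

/-- `b n = a n * z n + ∑_{k=1}^n ∑_{m=1}^k (-1)^{m+1} C(n,k)² C(n+k,k)²
      / (2 m³ C(n,m) C(n+m,m))`. -/
def bseq (n : ℕ) : ℚ :=
  aseq n * zseq n +
    ∑ k ∈ Finset.Icc 1 n, ∑ m ∈ Finset.Icc 1 k,
      (-1 : ℚ) ^ (m + 1) * (n.choose k : ℚ) ^ 2 * ((n + k).choose k : ℚ) ^ 2 /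
        (2 * (m : ℚ) ^ 3 * (n.choose m : ℚ) * ((n + m).choose m : ℚ))

/-!
Write `T n k = C(n,k) C(n+k,k)` and let `c n k` be the approximations to `ζ(3)` for which
`a n = ∑ k, (T n k)²` and `b n = ∑ k, (T n k)² * c n k`. Following Cohen and Zagier, the Apéry
operator in `n`, applied to the summand `(T n k)²`, is the difference in `k` of an explicit rational
multiple `G n k` of `(T (n + 1) k)²`, so the recurrence for `a` telescopes. As `T n k` times a
difference of `c` in `n` or in `k` is a rational function up to sign, summation by parts
turns the same certificate into one for the summand of `b`: it is `G n k * c (n + 1) k` plus a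
rational multiple of `T (n + 1) k`. The certificates vanish for `k > n + 1`.
-/

/-- The difference operator of Apéry's recurrence, so that the recurrence for `y` reads
`aperyOp y n = 0`. -/
def aperyOp (y : ℕ → ℚ) (n : ℕ) : ℚ :=
  ((n : ℚ) + 2) ^ 3 * y (n + 2)
    - (17 * (n : ℚ) ^ 2 + 51 * n + 39) * (2 * (n : ℚ) + 3) * y (n + 1)
    + ((n : ℚ) + 1) ^ 3 * y n

lemma aperyOp_sum {ι : Type*} (s : Finset ι) (f : ℕ → ι → ℚ) (n : ℕ) :
    aperyOp (fun m ↦ ∑ k ∈ s, f m k) n = ∑ k ∈ s, aperyOp (f · k) n := by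
  simp only [aperyOp, Finset.mul_sum, Finset.sum_add_distrib, Finset.sum_sub_distrib]

lemma aperyOp_sum_range_eq_zero {f : ℕ → ℕ → ℚ} {g : ℕ → ℚ} {n : ℕ}
    (hf : ∀ m k, m < k → f m k = 0) (zero : aperyOp (f · 0) n = g 0)
    (succ : ∀ k, aperyOp (f · (k + 1)) n = g (k + 1) - g k) (hg : g (n + 2) = 0) :
    aperyOp (fun m ↦ ∑ k ∈ Finset.range (m + 1), f m k) n = 0 := by
  have extend (m : ℕ) (hm : m ≤ n + 2) :
      ∑ k ∈ Finset.range (m + 1), f m k = ∑ k ∈ Finset.range (n + 3), f m k :=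
    Finset.sum_subset (Finset.range_subset_range.mpr (by omega)) fun k _ hk ↦
      hf m k (by rw [Finset.mem_range] at hk; omega)
  calc
    aperyOp (fun m ↦ ∑ k ∈ Finset.range (m + 1), f m k) n
      = aperyOp (fun m ↦ ∑ k ∈ Finset.range (n + 3), f m k) n := by
        simp only [aperyOp, extend n (by omega), extend (n + 1) (by omega), extend (n + 2) le_rfl]
    _ = ∑ k ∈ Finset.range (n + 2), (g (k + 1) - g k) + g 0 := by
        rw [aperyOp_sum, Finset.sum_range_succ', zero, Finset.sum_congr rfl fun k _ ↦ succ k]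
    _ = 0 := by rw [Finset.sum_range_sub, sub_add_cancel, hg]

section Binomials

/-- The product `C(n,k) C(n+k,k)`, whose square is the summand of `aseq n`. -/
def aperyBinom (n k : ℕ) : ℚ := (n.choose k : ℚ) * ((n + k).choose k : ℚ)

variable (n k : ℕ)

lemma aperyBinom_zero_right : aperyBinom n 0 = 1 := by simp [aperyBinom]

variable {n k} in
lemma aperyBinom_eq_zero_of_lt (h : n < k) : aperyBinom n k = 0 := by
  simp [aperyBinom, Nat.choose_eq_zero_of_lt h]

variable {n k} in
lemma aperyBinom_ne_zero (h : k ≤ n) : aperyBinom n k ≠ 0 := by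
  have := Nat.choose_pos h
  have := Nat.choose_pos (Nat.le_add_left k n)
  unfold aperyBinom
  positivity

lemma add_one_mul_cast_choose_add :
    ((n : ℚ) + 1) * ((n + 1 + k).choose k : ℚ) = (n + 1 + k) * ((n + k).choose k : ℚ) := by
  have h := Nat.choose_mul_succ_eq (n + k) k
  rw [show n + k + 1 - k = n + 1 by omega, show n + k + 1 = n + 1 + k by omega] at h
  have h' : ((n + k).choose k : ℚ) * (n + 1 + k) = (n + 1 + k).choose k * (n + 1) := mod_cast h
  linear_combination -h'

lemma aperyBinom_eq_mul_succ_left :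
    aperyBinom n k = (n + 1 - k) / (n + 1 + k) * aperyBinom (n + 1) k := by
  have h₁ : (n.choose k : ℚ) * (n + 1) = (n + 1).choose k * (n + 1 - k) := by
    rcases le_or_gt k (n + 1) with hk | hk
    · have h := Nat.choose_mul_succ_eq n k
      zify [hk] at h
      exact_mod_cast h
    · simp [Nat.choose_eq_zero_of_lt hk, Nat.choose_eq_zero_of_lt (show n < k by omega)]
  have h₂ := add_one_mul_cast_choose_add n k
  unfold aperyBinom
  field_simp
  apply mul_left_cancel₀ (Nat.cast_add_one_ne_zero (R := ℚ) n)
  linear_combination (n + 1 + k : ℚ) * (n + k).choose k * h₁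
    - ((n + 1).choose k : ℚ) * (n + 1 - k) * h₂

lemma aperyBinom_eq_mul_succ_succ :
    aperyBinom n k
      = (k + 1) ^ 2 / ((n + 1 + k) * (n + 2 + k)) * aperyBinom (n + 1) (k + 1) := by
  have h₁ : ((n : ℚ) + 1) * n.choose k = (n + 1).choose (k + 1) * (k + 1) :=
    mod_cast Nat.add_one_mul_choose_eq n k
  have h₂ := add_one_mul_cast_choose_add n k
  have h₃ : ((n : ℚ) + 2 + k) * (n + 1 + k).choose k
      = (n + 1 + (k + 1)).choose (k + 1) * (k + 1) := by
    have h : ((n + 1 + k : ℕ) + 1 : ℚ) * (n + 1 + k).choose k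
        = (n + 1 + (k + 1)).choose (k + 1) * (k + 1) :=
      mod_cast Nat.add_one_mul_choose_eq (n + 1 + k) k
    push_cast at h
    linear_combination h
  unfold aperyBinom
  field_simp
  apply mul_left_cancel₀ (Nat.cast_add_one_ne_zero (R := ℚ) n)
  linear_combination -(n + 2 + k : ℚ) * (n + 1) * n.choose k * h₂
    + (n + 1 : ℚ) * n.choose k * (n + 1) * h₃
    + (n + 1 + (k + 1)).choose (k + 1) * (k + 1) * (n + 1 : ℚ) * h₁

end Binomials

section Approximations

/-- The approximation `c n k` to `ζ(3)`, so that `bseq n` is the sum over `k` of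
`aperyBinom n k ^ 2 * aperyApprox n k`. It is meaningful for `k ≤ n` only: the terms with `m > n`
are divisions by zero, hence `0`. -/
def aperyApprox (n k : ℕ) : ℚ :=
  zseq n + ∑ m ∈ Finset.Icc 1 k, (-1 : ℚ) ^ (m + 1) / (2 * (m : ℚ) ^ 3 * aperyBinom n m)

variable (n k : ℕ)

lemma zseq_succ : zseq (n + 1) = zseq n + 1 / ((n : ℚ) + 1) ^ 3 := by
  simp [zseq, Finset.sum_Icc_succ_top]

lemma aperyApprox_zero_right : aperyApprox n 0 = zseq n := by simp [aperyApprox]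

lemma aperyApprox_succ_right : aperyApprox n (k + 1)
    = aperyApprox n k + (-1) ^ k / (2 * ((k : ℚ) + 1) ^ 3 * aperyBinom n (k + 1)) := by
  simp [aperyApprox, Finset.sum_Icc_succ_top, pow_succ, add_assoc]

variable {n k} in
lemma aperyApprox_succ_left (h : k ≤ n) : aperyApprox (n + 1) k
    = aperyApprox n k + (-1) ^ k / (((n : ℚ) + 1) ^ 2 * (n + 1 + k) * aperyBinom n k) := by
  induction k with
  | zero =>
    rw [aperyApprox_zero_right, aperyApprox_zero_right, zseq_succ, aperyBinom_zero_right]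
    push_cast
    field_simp
    ring
  | succ k ih =>
    have hT : aperyBinom (n + 1) (k + 1) ≠ 0 := aperyBinom_ne_zero (by omega)
    have hnk : (n : ℚ) - k ≠ 0 := sub_ne_zero.mpr (by exact_mod_cast (show n ≠ k by omega))
    rw [aperyApprox_succ_right, aperyApprox_succ_right, ih (by omega),
      aperyBinom_eq_mul_succ_left n (k + 1), aperyBinom_eq_mul_succ_succ, pow_succ]
    push_cast [add_sub_add_right_eq_sub]
    field_simp
    ring

lemma aperyBinom_sq_mul_aperyApprox_succ_right_sub :
    aperyBinom n (k + 1) ^ 2 * (aperyApprox n (k + 1) - aperyApprox n k)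
      = (-1) ^ k * aperyBinom n (k + 1) / (2 * (k + 1) ^ 3) := by
  rw [aperyApprox_succ_right, add_sub_cancel_left]
  rcases eq_or_ne (aperyBinom n (k + 1)) 0 with hT | hT
  · simp [hT]
  · field_simp

lemma aperyBinom_sq_mul_aperyApprox_succ_left_sub :
    aperyBinom n k ^ 2 * (aperyApprox (n + 1) k - aperyApprox n k)
      = (-1) ^ k * aperyBinom n k / ((n + 1) ^ 2 * (n + 1 + k)) := by
  rcases le_or_gt k n with hk | hk
  · have hT := aperyBinom_ne_zero hk
    rw [aperyApprox_succ_left hk, add_sub_cancel_left]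
    field_simp
  · simp [aperyBinom_eq_zero_of_lt hk]

lemma aperyBinom_sq_mul_aperyApprox_succ_succ_sub :
    aperyBinom (n + 1) (k + 1) ^ 2 * (aperyApprox (n + 1) (k + 1) - aperyApprox n k)
      = (-1) ^ k * (aperyBinom (n + 1) (k + 1)
          * (1 / (2 * (k + 1) ^ 3) + (n + 2 + k) / ((n + 1) ^ 2 * (k + 1) ^ 2))) := by
  have right := aperyBinom_sq_mul_aperyApprox_succ_right_sub (n + 1) k
  have left := aperyBinom_sq_mul_aperyApprox_succ_left_sub n k
  rw [aperyBinom_eq_mul_succ_succ] at left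
  linear_combination (norm := skip)
    right + ((n + 1 + k) * (n + 2 + k) / (k + 1) ^ 2 : ℚ) ^ 2 * left
  field_simp
  ring

lemma aperyBinom_sq_mul_aperyApprox_antidiagonal_sub :
    aperyBinom n (k + 1) ^ 2 * (aperyApprox n (k + 1) - aperyApprox (n + 1) k)
      = (-1) ^ k * (aperyBinom n (k + 1) / (n + 2 + k)
          * ((n - k) / (2 * (k + 1) ^ 3) + 1 / (n + 1) ^ 2)) := by
  have right := aperyBinom_sq_mul_aperyApprox_succ_right_sub (n + 1) k
  have left := aperyBinom_sq_mul_aperyApprox_succ_left_sub n (k + 1)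
  have hT : aperyBinom n (k + 1) = (n - k) / (n + 2 + k) * aperyBinom (n + 1) (k + 1) := by
    convert aperyBinom_eq_mul_succ_left n (k + 1) using 2
    push_cast
    ring
  calc
    _ = ((n - k) / (n + 2 + k)) ^ 2 * (aperyBinom (n + 1) (k + 1) ^ 2
            * (aperyApprox (n + 1) (k + 1) - aperyApprox (n + 1) k))
          - aperyBinom n (k + 1) ^ 2 * (aperyApprox (n + 1) (k + 1) - aperyApprox n (k + 1)) := by
      rw [hT]
      ring
    _ = _ := by
      rw [right, left, hT, pow_succ (-1 : ℚ) k]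
      push_cast
      field_simp
      ring

end Approximations

section Certificates

variable (n k : ℕ)

/-- The telescoping certificate `G n k` for `aperyBinom n k ^ 2`, indexed so that
`G n (k + 1) - G n k` belongs to the summand at `k + 1`. -/
def aperyCert (n k : ℕ) : ℚ :=
  4 * (2 * n + 3) * (k * (2 * k + 1) - (2 * n + 3) ^ 2) * aperyBinom (n + 1) k ^ 2

/-- The telescoping certificate for `aperyBinom n k ^ 2 * aperyApprox n k`, indexed like
`aperyCert`. -/
def aperyApproxCert (n k : ℕ) : ℚ :=
  aperyCert n k * aperyApprox (n + 1) k
    - 5 * (2 * n + 3) * (-1) ^ k * k / ((n + 1) * (n + 2)) * aperyBinom (n + 1) k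

lemma aperyOp_aperyBinom_sq_zero : aperyOp (aperyBinom · 0 ^ 2) n = aperyCert n 0 := by
  simp only [aperyOp, aperyCert, aperyBinom_zero_right]
  push_cast
  ring

lemma aperyOp_aperyBinom_sq_succ :
    aperyOp (aperyBinom · (k + 1) ^ 2) n = aperyCert n (k + 1) - aperyCert n k := by
  simp only [aperyOp, aperyCert]
  rw [aperyBinom_eq_mul_succ_left n (k + 1), aperyBinom_eq_mul_succ_left (n + 1) (k + 1),
    aperyBinom_eq_mul_succ_succ (n + 1) k]
  push_cast
  field_simp
  ring

lemma aperyOp_aperyBinom_sq_mul_aperyApprox_zero :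
    aperyOp (fun m ↦ aperyBinom m 0 ^ 2 * aperyApprox m 0) n = aperyApproxCert n 0 := by
  simp only [aperyOp, aperyApproxCert, aperyCert, aperyBinom_zero_right, aperyApprox_zero_right,
    zseq_succ]
  push_cast
  field_simp
  ring

-- Every value of `aperyApprox` is compared with `aperyApprox (n + 1) k`, whose coefficient
-- vanishes by `aperyOp_aperyBinom_sq_succ`; `corrections` collects what remains.
lemma aperyOp_aperyBinom_sq_mul_aperyApprox_succ :
    aperyOp (fun m ↦ aperyBinom m (k + 1) ^ 2 * aperyApprox m (k + 1)) n
      = aperyApproxCert n (k + 1) - aperyApproxCert n k := by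
  have hG := aperyOp_aperyBinom_sq_succ n k
  have h₂ := aperyBinom_sq_mul_aperyApprox_succ_succ_sub (n + 1) k
  have h₁ := aperyBinom_sq_mul_aperyApprox_succ_right_sub (n + 1) k
  have h₀ := aperyBinom_sq_mul_aperyApprox_antidiagonal_sub n k
  have corrections :
      ((n : ℚ) + 2) ^ 3 * (aperyBinom (n + 2) (k + 1) *
          (1 / (2 * (k + 1) ^ 3) + (n + 3 + k) / ((n + 2) ^ 2 * (k + 1) ^ 2)))
        - ((17 * n ^ 2 + 51 * n + 39) * (2 * n + 3)
            + 4 * (2 * n + 3) * ((k + 1) * (2 * k + 3) - (2 * n + 3) ^ 2)) *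
          (aperyBinom (n + 1) (k + 1) / (2 * (k + 1) ^ 3))
        + (n + 1) ^ 3 * (aperyBinom n (k + 1) / (n + 2 + k) *
          ((n - k) / (2 * (k + 1) ^ 3) + 1 / (n + 1) ^ 2))
      = 5 * (2 * n + 3) / ((n + 1) * (n + 2)) *
          ((k + 1) * aperyBinom (n + 1) (k + 1) + k * aperyBinom (n + 1) k) := by
    rw [aperyBinom_eq_mul_succ_left n (k + 1), aperyBinom_eq_mul_succ_left (n + 1) (k + 1),
      aperyBinom_eq_mul_succ_succ (n + 1) k]
    push_cast
    field_simp
    ring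
  simp only [aperyOp, aperyApproxCert, aperyCert, pow_succ (-1 : ℚ) k] at hG ⊢
  push_cast at hG h₂ h₁ ⊢
  linear_combination aperyApprox (n + 1) k * hG + (n + 2 : ℚ) ^ 3 * h₂
    - ((17 * n ^ 2 + 51 * n + 39) * (2 * n + 3)
        + 4 * (2 * n + 3) * ((k + 1) * (2 * k + 3) - (2 * n + 3) ^ 2) : ℚ) * h₁
    + (n + 1 : ℚ) ^ 3 * h₀ + (-1) ^ k * corrections

end Certificates

lemma aseq_eq_sum_aperyBinom_sq (n : ℕ) :
    aseq n = ∑ k ∈ Finset.range (n + 1), aperyBinom n k ^ 2 := by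
  simp only [aseq, aperyBinom, mul_pow]

lemma bseq_eq_sum_aperyBinom_sq_mul_aperyApprox (n : ℕ) :
    bseq n = ∑ k ∈ Finset.range (n + 1), aperyBinom n k ^ 2 * aperyApprox n k := by
  simp only [aperyApprox, mul_add, Finset.sum_add_distrib, ← Finset.sum_mul,
    ← aseq_eq_sum_aperyBinom_sq, bseq]
  congr 1
  rw [Finset.range_eq_Ico, Finset.sum_eq_sum_Ico_succ_bot (by omega)]
  simp only [Finset.Icc_eq_empty_of_lt zero_lt_one, Finset.sum_empty, mul_zero, zero_add,
    Finset.mul_sum, aperyBinom]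
  refine Finset.sum_congr rfl fun k _ ↦ Finset.sum_congr rfl fun m _ ↦ ?_
  ring

/-- Both sequences `a` and `b` satisfy Apéry's second-order recurrence
`(n+2)³ y_{n+2} − (17n²+51n+39)(2n+3) y_{n+1} + (n+1)³ y_n = 0` for all `n ≥ 0`. -/
theorem apery_recurrence :
    (∀ n : ℕ, ((n : ℚ) + 2) ^ 3 * aseq (n + 2)
        - (17 * (n : ℚ) ^ 2 + 51 * n + 39) * (2 * (n : ℚ) + 3) * aseq (n + 1)
        + ((n : ℚ) + 1) ^ 3 * aseq n = 0) ∧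
    (∀ n : ℕ, ((n : ℚ) + 2) ^ 3 * bseq (n + 2)
        - (17 * (n : ℚ) ^ 2 + 51 * n + 39) * (2 * (n : ℚ) + 3) * bseq (n + 1)
        + ((n : ℚ) + 1) ^ 3 * bseq n = 0) := by
  have hT (n : ℕ) : aperyBinom (n + 1) (n + 2) = 0 := aperyBinom_eq_zero_of_lt (by omega)
  constructor <;> intro n
  · change aperyOp aseq n = 0
    rw [funext aseq_eq_sum_aperyBinom_sq]
    exact aperyOp_sum_range_eq_zero (fun m k h ↦ by simp [aperyBinom_eq_zero_of_lt h])
      (aperyOp_aperyBinom_sq_zero n) (aperyOp_aperyBinom_sq_succ n) (by simp [aperyCert, hT])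
  · change aperyOp bseq n = 0
    rw [funext bseq_eq_sum_aperyBinom_sq_mul_aperyApprox]
    exact aperyOp_sum_range_eq_zero (fun m k h ↦ by simp [aperyBinom_eq_zero_of_lt h])
      (aperyOp_aperyBinom_sq_mul_aperyApprox_zero n)
      (aperyOp_aperyBinom_sq_mul_aperyApprox_succ n) (by simp [aperyApproxCert, aperyCert, hT])
end
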